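/- Let E be a real normed vector space, let I be a finite nonempty index set, and let A : I → Set E be a family of sets. Every nonempty exposed face C of the Minkowski sum ∑_{i ∈ I} A i decomposes as C = ∑_{i ∈ I} F i, where for each i ∈ I, F i is a nonempty exposed face of A i. -/

import Mathlib

open Pointwise

/-!
Since a functional `l` is additive, a point `a + b` maximizes `l` over `A + B` if and only if `a`
maximizes `l` over `A` and `b` maximizes `l` over `B`; for the forward direction, vary one summand
while keeping the other fixed. Hence taking the face exposed by a fixed `l` commutes with Minkowski
sums, and the functional exposing a face of `∑ i ∈ I, A i` also exposes all summands of that face.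
-/

section MinkowskiSum

theorem nonempty_of_nonempty_finsetSum {M ι : Type*} [AddCommMonoid M] {I : Finset ι}
    {A : ι → Set M} (h : (∑ i ∈ I, A i).Nonempty) {i : ι} (hi : i ∈ I) : (A i).Nonempty := by
  obtain ⟨x, hx⟩ := h
  obtain ⟨a, ha, -⟩ := (Set.mem_finsetSum I A x).1 hx
  exact ⟨a i, ha hi⟩

variable {𝕜 E ι : Type*} [TopologicalSpace 𝕜] [Ring 𝕜] [PartialOrder 𝕜]
  [AddCommMonoid E] [TopologicalSpace E] [Module 𝕜 E]

theorem toExposed_zero (l : StrongDual 𝕜 E) : l.toExposed (0 : Set E) = 0 :=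
  Set.Subset.antisymm (fun _ hx => hx.1) fun _ hx => ⟨hx, fun _ hy => by rw [hx, hy]⟩

variable [IsOrderedAddMonoid 𝕜]

theorem add_mem_toExposed_add_iff (l : StrongDual 𝕜 E) {A B : Set E} {a b : E}
    (ha : a ∈ A) (hb : b ∈ B) :
    a + b ∈ l.toExposed (A + B) ↔ a ∈ l.toExposed A ∧ b ∈ l.toExposed B := by
  constructor
  · rintro ⟨-, hmax⟩
    refine ⟨⟨ha, fun a' ha' => ?_⟩, hb, fun b' hb' => ?_⟩
    · simpa only [map_add, add_le_add_iff_right] using hmax (a' + b) (Set.add_mem_add ha' hb)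
    · simpa only [map_add, add_le_add_iff_left] using hmax (a + b') (Set.add_mem_add ha hb')
  · rintro ⟨⟨-, hmaxA⟩, -, hmaxB⟩
    refine ⟨Set.add_mem_add ha hb, ?_⟩
    rintro _ ⟨a', ha', b', hb', rfl⟩
    simpa only [map_add] using add_le_add (hmaxA a' ha') (hmaxB b' hb')

theorem toExposed_add (l : StrongDual 𝕜 E) (A B : Set E) :
    l.toExposed (A + B) = l.toExposed A + l.toExposed B := by
  ext x
  constructor
  · intro hx
    obtain ⟨a, ha, b, hb, rfl⟩ := Set.mem_add.1 hx.1
    obtain ⟨haF, hbF⟩ := (add_mem_toExposed_add_iff l ha hb).1 hx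
    exact Set.add_mem_add haF hbF
  · rintro ⟨a, ha, b, hb, rfl⟩
    exact (add_mem_toExposed_add_iff l ha.1 hb.1).2 ⟨ha, hb⟩

theorem toExposed_finsetSum (l : StrongDual 𝕜 E) (I : Finset ι) (A : ι → Set E) :
    l.toExposed (∑ i ∈ I, A i) = ∑ i ∈ I, l.toExposed (A i) := by
  induction I using Finset.cons_induction with
  | empty => simp only [Finset.sum_empty, toExposed_zero]
  | cons i I hi ih => simp only [Finset.sum_cons, toExposed_add, ih]

theorem exposedFace_finset_minkowski_sum_decomposition_general (I : Finset ι) (A : ι → Set E)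
    (C : Set E) (hC : IsExposed 𝕜 (∑ i ∈ I, A i) C) (hCne : C.Nonempty) :
    ∃ F : ι → Set E, (∀ i ∈ I, (F i).Nonempty ∧ IsExposed 𝕜 (A i) (F i)) ∧
      C = ∑ i ∈ I, F i := by
  obtain ⟨l, hCl⟩ := hC hCne
  have hCsum : C = ∑ i ∈ I, l.toExposed (A i) := hCl.trans (toExposed_finsetSum l I A)
  have hne : (∑ i ∈ I, l.toExposed (A i)).Nonempty := hCsum ▸ hCne
  exact ⟨fun i => l.toExposed (A i),
    fun i hi => ⟨nonempty_of_nonempty_finsetSum hne hi,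
      ContinuousLinearMap.toExposed.isExposed⟩,
    hCsum⟩

end MinkowskiSum

theorem exposedFace_finset_minkowski_sum_decomposition {E : Type*}
    [NormedAddCommGroup E] [NormedSpace ℝ E] {ι : Type*} (I : Finset ι)
    (hI : I.Nonempty) (A : ι → Set E) (C : Set E)
    (hC : IsExposed ℝ (∑ i ∈ I, A i) C) (hCne : C.Nonempty) :
    ∃ F : ι → Set E, (∀ i ∈ I, (F i).Nonempty ∧ IsExposed ℝ (A i) (F i)) ∧
      C = ∑ i ∈ I, F i :=
  exposedFace_finset_minkowski_sum_decomposition_general I A C hC hCne
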